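/- Let q be an odd prime power, let n be an even positive integer, and let χ_2 be the quadratic character of the finite field F_{q^n}. Then for every integer g ≥ 1 and every x ∈ F_{q^n}, the sum over all triples (f1, f2, f3) ∈ F̂_g of χ_2((f1·f3)(x)) + χ_2((f2·f3)(x)) + χ_2((f1·f2)(x)) equals 3·(q−1)^2 times the sum over all triples (f1, f2, f3) ∈ F_g of χ_2((f1·f2)(x)). -/

import Mathlib

open Polynomial Classical

noncomputable section

/-- Quadratic character of a field `K`: 1 on nonzero squares, -1 on nonsquares, 0 at 0. -/
def quadCharFn (K : Type*) [Field K] (a : K) : ℤ :=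
  if a = 0 then 0 else if IsSquare a then 1 else -1

/-- Quadratic residue symbol modulo `P`: 1 if `F` is a nonzero square mod `P`,
-1 if a nonsquare, 0 if `P ∣ F`. -/
def chiP {Fq : Type*} [Field Fq] (P F : Fq[X]) : ℤ :=
  if P ∣ F then 0 else if ∃ G, P ∣ (F - G ^ 2) then 1 else -1

/-- The genus function `L(d1,d2,d3)`. -/
def Lg (d1 d2 d3 : ℕ) : ℕ :=
  if Even (d1 + d3) ∧ Even (d2 + d3) then d1 + d2 + d3 else d1 + d2 + d3 + 1

/-- The parameter set `F̂_g` of triples of square-free pairwise coprime polynomials,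
`f3` monic, satisfying the genus condition and avoiding the degenerate degrees. -/
def FhatSet (Fq : Type*) [Field Fq] (g : ℕ) : Set (Fq[X] × Fq[X] × Fq[X]) :=
  {t | Squarefree t.1 ∧ Squarefree t.2.1 ∧ Squarefree t.2.2 ∧
       IsCoprime t.1 t.2.1 ∧ IsCoprime t.1 t.2.2 ∧ IsCoprime t.2.1 t.2.2 ∧
       t.2.2.Monic ∧
       Lg t.1.natDegree t.2.1.natDegree t.2.2.natDegree = g + 3 ∧
       ({t.1.natDegree, t.2.1.natDegree, t.2.2.natDegree} : Multiset ℕ) ≠ {g + 3, 0, 0} ∧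
       ({t.1.natDegree, t.2.1.natDegree, t.2.2.natDegree} : Multiset ℕ) ≠ {g + 2, 0, 0}}

/-- The parameter set `F_g`: triples in `F̂_g` with all three polynomials monic. -/
def FSet (Fq : Type*) [Field Fq] (g : ℕ) : Set (Fq[X] × Fq[X] × Fq[X]) :=
  {t | t ∈ FhatSet Fq g ∧ t.1.Monic ∧ t.2.1.Monic}

end

/-!
Each triple in `F̂_g` is uniquely `(u f₁, v f₂, f₃)` with `u, v ∈ F_qˣ` and `(f₁, f₂, f₃) ∈ F_g`.
If `q` is odd and `|K| = q^(2m)`, constants of `F_q` are squares in `K`, because `q^m - 1` divides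
`(q^(2m) - 1) / 2`; so the scalars `u, v` do not change the values of `χ₂`, and the sum over `F̂_g`
is `(q - 1)²` times the sum over `F_g`. As `F_g` is stable under permutations of the three
polynomials, the three terms have the same sum.
-/

section Finsum

variable {α β M : Type*} [AddCommMonoid M]

lemma finsum_mem_comp_of_involutive {s : Set α} {e : α → α} (he : Function.Involutive e)
    (hs : Set.MapsTo e s s) (f : α → M) : ∑ᶠ a ∈ s, f (e a) = ∑ᶠ a ∈ s, f a :=
  finsum_mem_eq_of_bijOn e
    (Set.InvOn.bijOn ⟨he.leftInverse.leftInvOn s, he.rightInverse.rightInvOn s⟩ hs hs)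
    fun _ _ => rfl

lemma finsum_mem_univ_prod_snd [Fintype α] {s : Set β} (hs : s.Finite) (f : β → M) :
    ∑ᶠ p ∈ (Set.univ : Set α) ×ˢ s, f p.2 = Fintype.card α • ∑ᶠ b ∈ s, f b := by
  lift s to Finset β using hs
  simp only [← Finset.coe_univ, ← Finset.coe_product, finsum_mem_coe_finset,
    Finset.sum_product, Finset.sum_const, Finset.card_univ]

end Finsum

section QuadraticCharacter

variable {F K : Type*} [Field F] [Field K]

lemma quadCharFn_mul_of_isSquare_left {s : K} (hs : s ≠ 0) (hsq : IsSquare s) (a : K) :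
    quadCharFn K (s * a) = quadCharFn K a := by
  have isSquare_mul_iff : IsSquare (s * a) ↔ IsSquare a :=
    ⟨fun h => by simpa [hs] using h.div hsq, hsq.mul⟩
  simp only [quadCharFn, mul_eq_zero, hs, false_or, isSquare_mul_iff]

lemma quadCharFn_aeval_units_smul [Algebra F K] {u : Fˣ} (hu : IsSquare (algebraMap F K u))
    (x : K) (p : F[X]) : quadCharFn K (aeval x (u • p)) = quadCharFn K (aeval x p) := by
  rw [Units.smul_def, map_smul, Algebra.smul_def]
  exact quadCharFn_mul_of_isSquare_left (by simp) hu _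

lemma sq_div_two_of_odd {r : ℕ} (hr : Odd r) : r ^ 2 / 2 = (r - 1) * ((r + 1) / 2) := by
  obtain ⟨k, rfl⟩ := hr
  have h : (2 * k + 1) ^ 2 = 2 * (2 * k * (k + 1)) + 1 := by ring
  rw [h, Nat.add_sub_cancel, show (2 * k + 1 + 1) / 2 = k + 1 by omega]
  omega

lemma finrank_eq_of_card_eq_pow {V : Type*} [AddCommGroup V] [Module F V] [Fintype F] [Fintype V]
    {n : ℕ} (hV : Fintype.card V = Fintype.card F ^ n) : Module.finrank F V = n :=
  Nat.pow_right_injective Fintype.one_lt_card (Module.card_eq_pow_finrank.symm.trans hV)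

lemma isSquare_algebraMap_of_even_finrank [Finite K] [Algebra F K]
    (hK : Even (Module.finrank F K)) (c : F) : IsSquare (algebraMap F K c) := by
  have := Fintype.ofFinite K
  have := Fintype.ofInjective _ (algebraMap F K).injective
  rcases eq_or_ne c 0 with rfl | hc
  · simp
  by_cases hchar : ringChar K = 2
  · exact FiniteField.isSquare_of_char_two hchar _
  obtain ⟨m, hm⟩ := hK
  have card_eq : Fintype.card K = (Fintype.card F ^ m) ^ 2 := by
    rw [Module.card_eq_pow_finrank (K := F), hm, ← pow_mul, mul_two]
  have card_odd : Odd (Fintype.card F ^ m) := by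
    have := Nat.odd_iff.mpr (FiniteField.odd_card_of_char_ne_two hchar)
    rwa [card_eq, Nat.odd_pow_iff two_ne_zero] at this
  have pow_eq_one : c ^ (Fintype.card F ^ m - 1) = 1 := by
    refine mul_right_cancel₀ hc ?_
    rw [← pow_succ, Nat.sub_add_cancel card_odd.pos, FiniteField.pow_card_pow, one_mul]
  rw [FiniteField.isSquare_iff hchar (by simpa using hc), card_eq, sq_div_two_of_odd card_odd,
    ← map_pow, pow_mul, pow_eq_one, one_pow, map_one]

end QuadraticCharacter

section Polynomials

lemma squarefree_group_smul_iff {G R : Type*} [Group G] [Monoid R] [MulAction G R]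
    [SMulCommClass G R R] (u : G) {p : R} : Squarefree (u • p) ↔ Squarefree p := by
  have dvd_smul (w : G) (r : R) : r ∣ w • r := ⟨w • 1, by rw [mul_smul_comm, mul_one]⟩
  have smul_dvd : u • p ∣ p := by simpa only [inv_smul_smul] using dvd_smul u⁻¹ (u • p)
  exact ⟨.squarefree_of_dvd (dvd_smul u p), .squarefree_of_dvd smul_dvd⟩

lemma natDegree_units_smul {R : Type*} [Semiring R] (u : Rˣ) (p : R[X]) :
    (u • p).natDegree = p.natDegree :=
  natDegree_smul_of_smul_regular p (isSMulRegular_of_group u)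

lemma leadingCoeff_units_smul {R : Type*} [Semiring R] (u : Rˣ) (p : R[X]) :
    (u • p).leadingCoeff = u * p.leadingCoeff :=
  leadingCoeff_smul_of_smul_regular p (isSMulRegular_of_group u)

lemma units_smul_eq_units_smul_iff_of_monic {R : Type*} [Semiring R] {a b : R[X]}
    (ha : a.Monic) (hb : b.Monic) {u v : Rˣ} : u • a = v • b ↔ u = v ∧ a = b := by
  refine ⟨fun h => ?_, by rintro ⟨rfl, rfl⟩; rfl⟩
  have huv : u = v := by
    simpa [leadingCoeff_units_smul, ha.leadingCoeff, hb.leadingCoeff, Units.val_inj]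
      using congrArg leadingCoeff h
  exact ⟨huv, smul_left_cancel v (huv ▸ h)⟩

lemma exists_units_smul_monic {F : Type*} [DivisionRing F] {p : F[X]} (hp : p ≠ 0) :
    ∃ (u : Fˣ) (a : F[X]), a.Monic ∧ u • a = p := by
  have hunit : IsUnit p.leadingCoeff := (leadingCoeff_ne_zero.mpr hp).isUnit
  exact ⟨hunit.unit, _, monic_of_isUnit_leadingCoeff_inv_smul hunit, smul_inv_smul _ _⟩

lemma finite_setOf_natDegree_le {R : Type*} [Semiring R] [Finite R] (d : ℕ) :
    {p : R[X] | p.natDegree ≤ d}.Finite := by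
  have : Finite (degreeLT R (d + 1)) := Module.finite_of_finite R
  refine (degreeLT R (d + 1) : Set R[X]).toFinite.subset fun p hp => ?_
  rw [SetLike.mem_coe, mem_degreeLT, degree_lt_iff_coeff_zero]
  exact fun m hm => coeff_eq_zero_of_natDegree_lt (lt_of_le_of_lt hp hm)

end Polynomials

section Triples

variable {F : Type*} [Field F] {g : ℕ}

lemma Lg_swap_left (a b c : ℕ) : Lg b a c = Lg a b c := by
  simp only [Lg, and_comm, add_comm b a]

lemma Lg_swap_right (a b c : ℕ) : Lg a c b = Lg a b c := by
  have parity : Even (a + b) ∧ Even (c + b) ↔ Even (a + c) ∧ Even (b + c) := by grind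
  simp only [Lg, parity, add_right_comm a c b]

lemma swap_left_mem_FSet {t : F[X] × F[X] × F[X]} (ht : t ∈ FSet F g) :
    (t.2.1, t.1, t.2.2) ∈ FSet F g := by
  obtain ⟨⟨sq1, sq2, sq3, cop12, cop13, cop23, monic3, hL, hne3, hne2⟩, monic1, monic2⟩ := ht
  exact ⟨⟨sq2, sq1, sq3, cop12.symm, cop23, cop13, monic3, (Lg_swap_left ..).trans hL,
    (Multiset.cons_swap ..).trans_ne hne3, (Multiset.cons_swap ..).trans_ne hne2⟩, monic2, monic1⟩

lemma swap_right_mem_FSet {t : F[X] × F[X] × F[X]} (ht : t ∈ FSet F g) :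
    (t.1, t.2.2, t.2.1) ∈ FSet F g := by
  obtain ⟨⟨sq1, sq2, sq3, cop12, cop13, cop23, monic3, hL, hne3, hne2⟩, monic1, monic2⟩ := ht
  have swap_eq (a b c : ℕ) : ({a, c, b} : Multiset ℕ) = {a, b, c} :=
    congrArg (Multiset.cons a) (Multiset.pair_comm c b)
  exact ⟨⟨sq1, sq3, sq2, cop13, cop12, cop23.symm, monic2, (Lg_swap_right ..).trans hL,
    (swap_eq ..).trans_ne hne3, (swap_eq ..).trans_ne hne2⟩, monic1, monic3⟩

variable {M : Type*} [AddCommMonoid M]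

lemma finsum_mem_FSet_swap_left (f : F[X] → F[X] → F[X] → M) :
    ∑ᶠ t ∈ FSet F g, f t.2.1 t.1 t.2.2 = ∑ᶠ t ∈ FSet F g, f t.1 t.2.1 t.2.2 :=
  finsum_mem_comp_of_involutive (e := fun t => (t.2.1, t.1, t.2.2)) (fun _ => rfl)
    (fun _ => swap_left_mem_FSet) fun t => f t.1 t.2.1 t.2.2

lemma finsum_mem_FSet_swap_right (f : F[X] → F[X] → F[X] → M) :
    ∑ᶠ t ∈ FSet F g, f t.1 t.2.2 t.2.1 = ∑ᶠ t ∈ FSet F g, f t.1 t.2.1 t.2.2 :=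
  finsum_mem_comp_of_involutive (e := fun t => (t.1, t.2.2, t.2.1)) (fun _ => rfl)
    (fun _ => swap_right_mem_FSet) fun t => f t.1 t.2.1 t.2.2

lemma FSet_finite [Finite F] : (FSet F g).Finite := by
  have hfin := finite_setOf_natDegree_le (R := F) (g + 3)
  refine (hfin.prod (hfin.prod hfin)).subset ?_
  rintro ⟨a, b, c⟩ ⟨⟨-, -, -, -, -, -, -, hL, -, -⟩, -, -⟩
  simp only [Lg] at hL
  simp only [Set.mem_prod, Set.mem_ofPred_eq]
  split_ifs at hL <;> omega

lemma units_smul_mem_FhatSet_iff (u v : Fˣ) {a b c : F[X]} :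
    (u • a, v • b, c) ∈ FhatSet F g ↔ (a, b, c) ∈ FhatSet F g := by
  simp only [FhatSet, Set.mem_ofPred_eq, squarefree_group_smul_iff, isCoprime_group_smul_left,
    isCoprime_group_smul_right, natDegree_units_smul]

/-- The action of a pair of units `(u, v)` on a triple by `(f₁, f₂, f₃) ↦ (u f₁, v f₂, f₃)`,
which parametrizes `F̂_g` by `F_g`. It is uncurried so that it can be used as a map of sets. -/
noncomputable def scaleTriple (p : (Fˣ × Fˣ) × F[X] × F[X] × F[X]) : F[X] × F[X] × F[X] :=
  (p.1.1 • p.2.1, p.1.2 • p.2.2.1, p.2.2.2)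

lemma scaleTriple_bijOn :
    Set.BijOn scaleTriple (Set.univ ×ˢ FSet F g) (FhatSet F g) := by
  refine ⟨?mapsTo, ?injOn, ?surjOn⟩
  case mapsTo =>
    rintro ⟨⟨u, v⟩, a, b, c⟩ ⟨-, ht, -⟩
    exact (units_smul_mem_FhatSet_iff u v).mpr ht
  case injOn =>
    rintro ⟨⟨u, v⟩, a, b, c⟩ ⟨-, -, ha, hb⟩ ⟨⟨u', v'⟩, a', b', c'⟩ ⟨-, -, ha', hb'⟩ h
    simp only [scaleTriple, Prod.mk.injEq] at h
    obtain ⟨h1, h2, rfl⟩ := h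
    obtain ⟨rfl, rfl⟩ := (units_smul_eq_units_smul_iff_of_monic ha ha').mp h1
    obtain ⟨rfl, rfl⟩ := (units_smul_eq_units_smul_iff_of_monic hb hb').mp h2
    rfl
  case surjOn =>
    rintro ⟨p, r, c⟩ ht
    obtain ⟨u, a, ha, rfl⟩ := exists_units_smul_monic ht.1.ne_zero
    obtain ⟨v, b, hb, rfl⟩ := exists_units_smul_monic ht.2.1.ne_zero
    exact ⟨((u, v), a, b, c), ⟨Set.mem_univ _, (units_smul_mem_FhatSet_iff u v).mp ht, ha, hb⟩, rfl⟩

lemma finsum_mem_FhatSet_of_scale_invariant [Fintype F] {f : F[X] × F[X] × F[X] → M}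
    (hf : ∀ p, f (scaleTriple p) = f p.2) :
    ∑ᶠ t ∈ FhatSet F g, f t = (Fintype.card F - 1) ^ 2 • ∑ᶠ t ∈ FSet F g, f t := by
  rw [← finsum_mem_eq_of_bijOn scaleTriple scaleTriple_bijOn fun p _ => (hf p).symm,
    finsum_mem_univ_prod_snd FSet_finite, Fintype.card_prod, Fintype.card_units, sq]

end Triples

theorem stmt2_general {F K : Type*} [Field F] [Fintype F] [Field K] [Algebra F K]
    (hsq : ∀ c : F, IsSquare (algebraMap F K c)) (g : ℕ) (x : K) :
    (∑ᶠ t ∈ FhatSet F g,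
        (quadCharFn K (aeval x (t.1 * t.2.2)) + quadCharFn K (aeval x (t.2.1 * t.2.2)) +
          quadCharFn K (aeval x (t.1 * t.2.1)))) =
      3 * ((Fintype.card F : ℤ) - 1) ^ 2 *
        ∑ᶠ t ∈ FSet F g, quadCharFn K (aeval x (t.1 * t.2.1)) := by
  let χ (a b : F[X]) : ℤ := quadCharFn K (aeval x (a * b))
  have χ_smul_left (u : Fˣ) (a b : F[X]) : χ (u • a) b = χ a b := by
    simpa only [χ, smul_mul_assoc] using quadCharFn_aeval_units_smul (hsq u) x (a * b)
  have χ_smul_right (u : Fˣ) (a b : F[X]) : χ a (u • b) = χ a b := by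
    simpa only [χ, mul_smul_comm] using quadCharFn_aeval_units_smul (hsq u) x (a * b)
  have sum_χ13 : ∑ᶠ t ∈ FSet F g, χ t.1 t.2.2 = ∑ᶠ t ∈ FSet F g, χ t.1 t.2.1 :=
    finsum_mem_FSet_swap_right fun a b _ => χ a b
  have sum_χ23 : ∑ᶠ t ∈ FSet F g, χ t.2.1 t.2.2 = ∑ᶠ t ∈ FSet F g, χ t.1 t.2.2 :=
    finsum_mem_FSet_swap_left fun a _ c => χ a c
  change ∑ᶠ t ∈ FhatSet F g, (χ t.1 t.2.2 + χ t.2.1 t.2.2 + χ t.1 t.2.1) =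
    3 * ((Fintype.card F : ℤ) - 1) ^ 2 * ∑ᶠ t ∈ FSet F g, χ t.1 t.2.1
  rw [finsum_mem_FhatSet_of_scale_invariant fun p => by
      simp only [scaleTriple, χ_smul_left, χ_smul_right],
    finsum_mem_add_distrib FSet_finite, finsum_mem_add_distrib FSet_finite, sum_χ23, sum_χ13,
    nsmul_eq_mul, Nat.cast_pow, Nat.cast_pred Fintype.card_pos]
  ring

/-- for even `n`, for every `x ∈ F_{q^n}`, the sum over `F̂_g` of
`χ₂((f1f3)(x)) + χ₂((f2f3)(x)) + χ₂((f1f2)(x))` equals `3(q-1)²` times the sum over `F_g`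
of `χ₂((f1f2)(x))`. -/
theorem stmt2 (q : ℕ) (hq_odd : Odd q) (hq_pp : IsPrimePow q)
    (n : ℕ) (hn_pos : 0 < n) (hn_even : Even n)
    (Fq : Type) [Field Fq] [Fintype Fq] (hFq : Fintype.card Fq = q)
    (K : Type) [Field K] [Fintype K] [Algebra Fq K] (hK : Fintype.card K = q ^ n)
    (g : ℕ) (hg : 1 ≤ g) (x : K) :
    (∑ᶠ t ∈ FhatSet Fq g,
        (quadCharFn K (aeval x (t.1 * t.2.2)) + quadCharFn K (aeval x (t.2.1 * t.2.2)) +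
          quadCharFn K (aeval x (t.1 * t.2.1)))) =
      3 * ((q : ℤ) - 1) ^ 2 * ∑ᶠ t ∈ FSet Fq g, quadCharFn K (aeval x (t.1 * t.2.1)) := by
  subst hFq
  exact stmt2_general
    (isSquare_algebraMap_of_even_finrank ((finrank_eq_of_card_eq_pow hK).symm ▸ hn_even)) g x
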